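/- Let D be a finite set of at least two points in the Euclidean plane, and for each t ∈ D let d(t) = min_{t'∈D, t'≠t} dist(t, t') and let ε be a real number with 0 < ε < d(t) for all t ∈ D. Let a : D → ℝ and w : D → ℝ be functions with a(t) > 0 and ((d(t) − ε)/d(t))² · a(t) ≤ w(t) ≤ a(t) for every t ∈ D. Then | Σ_{t∈D} a(t)/w(t) − |D| | ≤ Σ_{t∈D} (2·d(t)·ε − ε²)/((d(t) − ε)²). -/

import Mathlib

section EstimatorBias

variable {K : Type*} [Field K]

lemma inv_div_pow_sub_one {x : K} (hx : x ≠ 0) (y : K) (n : ℕ) :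
    ((x / y) ^ n)⁻¹ - 1 = (y ^ n - x ^ n) / x ^ n := by
  rw [← inv_pow, inv_div, div_pow, div_sub_one (pow_ne_zero n hx)]

variable [LinearOrder K] [IsStrictOrderedRing K]

lemma abs_div_sub_one_le_inv_sub_one {a w r : K} (ha : 0 < a) (hr : 0 < r)
    (hrw : r * a ≤ w) (hwa : w ≤ a) : |a / w - 1| ≤ r⁻¹ - 1 := by
  have hw : 0 < w := (mul_pos hr ha).trans_le hrw
  have one_le : 1 ≤ a / w := (one_le_div hw).mpr hwa
  have le_inv : a / w ≤ r⁻¹ := by rwa [div_le_iff₀ hw, le_inv_mul_iff₀ hr]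
  rw [abs_of_nonneg (sub_nonneg.mpr one_le)]
  exact sub_le_sub_right le_inv 1

lemma abs_sum_div_sub_card_le {ι : Type*} (s : Finset ι) {a w r : ι → K}
    (ha : ∀ i ∈ s, 0 < a i) (hr : ∀ i ∈ s, 0 < r i)
    (hw : ∀ i ∈ s, r i * a i ≤ w i ∧ w i ≤ a i) :
    |(∑ i ∈ s, a i / w i) - (s.card : K)| ≤ ∑ i ∈ s, ((r i)⁻¹ - 1) := by
  calc |(∑ i ∈ s, a i / w i) - (s.card : K)|
      = |∑ i ∈ s, (a i / w i - 1)| := by simp [Finset.sum_sub_distrib]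
    _ ≤ ∑ i ∈ s, |a i / w i - 1| := Finset.abs_sum_le_sum_abs _ _
    _ ≤ ∑ i ∈ s, ((r i)⁻¹ - 1) := Finset.sum_le_sum fun i hi =>
        abs_div_sub_one_le_inv_sub_one (ha i hi) (hr i hi) (hw i hi).1 (hw i hi).2

end EstimatorBias

-- The exponent `n` is the dimension of the ambient space: shrinking a cell about its tuple by the
-- factor `(d t - ε t) / d t` scales its volume by the `n`-th power of that factor.
theorem count_estimator_bias_bound_general {X : Type*} [MetricSpace X] (n : ℕ) (D : Finset X)
    (d : X → ℝ)
    (hd : ∀ t ∈ D, (∃ t' ∈ D, t' ≠ t ∧ d t = dist t t') ∧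
      ∀ t' ∈ D, t' ≠ t → d t ≤ dist t t')
    (ε : X → ℝ) (hεd : ∀ t ∈ D, ε t < d t)
    (a w : X → ℝ)
    (ha : ∀ t ∈ D, 0 < a t)
    (hw : ∀ t ∈ D, ((d t - ε t) / d t) ^ n * a t ≤ w t ∧ w t ≤ a t) :
    |(∑ t ∈ D, a t / w t) - (D.card : ℝ)| ≤
      ∑ t ∈ D, (d t ^ n - (d t - ε t) ^ n) / (d t - ε t) ^ n := by
  have d_pos : ∀ t ∈ D, 0 < d t := by
    intro t ht
    obtain ⟨⟨t', -, hne, hdist⟩, -⟩ := hd t ht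
    exact hdist ▸ dist_pos.mpr hne.symm
  have gap_pos : ∀ t ∈ D, 0 < d t - ε t := fun t ht => sub_pos.mpr (hεd t ht)
  calc |(∑ t ∈ D, a t / w t) - (D.card : ℝ)|
      ≤ ∑ t ∈ D, ((((d t - ε t) / d t) ^ n)⁻¹ - 1) :=
        abs_sum_div_sub_card_le D ha
          (fun t ht => pow_pos (div_pos (gap_pos t ht) (d_pos t ht)) n) hw
    _ = ∑ t ∈ D, (d t ^ n - (d t - ε t) ^ n) / (d t - ε t) ^ n :=
        Finset.sum_congr rfl fun t ht => inv_div_pow_sub_one (gap_pos t ht).ne' (d t) n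

/-- Theorem 2 of the paper: if for each tuple `t` the estimated cell volume `w t`
satisfies `((d t − ε)/d t)² · a t ≤ w t ≤ a t`, where `a t` is the true cell volume and
`d t` is the nearest distance from `t` to another tuple, then the bias of the COUNT(*)
estimator is at most `Σ_t (2·d t·ε − ε²)/((d t − ε)²)`. -/
theorem count_estimator_bias_bound (D : Finset (EuclideanSpace ℝ (Fin 2)))
    (hD : 2 ≤ D.card)
    (d : EuclideanSpace ℝ (Fin 2) → ℝ)
    (hd : ∀ t ∈ D, (∃ t' ∈ D, t' ≠ t ∧ d t = dist t t') ∧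
      ∀ t' ∈ D, t' ≠ t → d t ≤ dist t t')
    (ε : ℝ) (hε : 0 < ε) (hεd : ∀ t ∈ D, ε < d t)
    (a w : EuclideanSpace ℝ (Fin 2) → ℝ)
    (ha : ∀ t ∈ D, 0 < a t)
    (hw : ∀ t ∈ D, ((d t - ε) / d t) ^ 2 * a t ≤ w t ∧ w t ≤ a t) :
    |(∑ t ∈ D, a t / w t) - (D.card : ℝ)| ≤
      ∑ t ∈ D, (2 * d t * ε - ε ^ 2) / (d t - ε) ^ 2 := by
  have sq_sub_sq_sub : ∀ t, d t ^ 2 - (d t - ε) ^ 2 = 2 * d t * ε - ε ^ 2 := fun t => by ring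
  simpa only [sq_sub_sq_sub] using
    count_estimator_bias_bound_general 2 D d hd (fun _ => ε) hεd a w ha hw
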